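/- For every Cayley tree T labelled with [n]_0, the weary permutation of T coincides with the bird's-eye permutation of its preference sequence: ω_T = ω_{π_T}. -/

import Mathlib

/-!
Vertex `c`, seen as a car, prefers the spot right after the step at which its parent is visited.
Hence `c` is a candidate of the priority-first search at exactly the steps `s` with
`π_T(c) ≤ s ≤ ω_T⁻¹(c)`. The search takes the smallest candidate, so every step `s` with
`π_T(c) ≤ s < ω_T⁻¹(c)` visits a vertex smaller than `c`, that is, a car entering earlier. Thus
`ω_T⁻¹(c)` is the first spot from `π_T(c)` on that differs from all `ω_T⁻¹(d)` with `d < c`. This is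
the recursion defining the parking process, so car `c` parks at spot `ω_T⁻¹(c)`.
-/

open scoped Classical

namespace WearyParking

/-- `f` is the parent function of a Cayley tree on `{0,…,n}` rooted at `0`:
`f 0 = 0`, `f` is pinned to `0` outside `{1,…,n}`, `f` maps `{1,…,n}` into `{0,…,n}`,
and every vertex reaches the root under iteration. -/
def IsCayleyTree (n : ℕ) (f : ℕ → ℕ) : Prop :=
  f 0 = 0 ∧ (∀ i, n < i → f i = 0) ∧
  (∀ i, 1 ≤ i → i ≤ n → f i ≤ n) ∧
  (∀ i, 1 ≤ i → i ≤ n → ∃ k, f^[k] i = 0)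

/-- A non-root vertex `i` is a record of the tree if it is greater than
all of its ancestors. -/
def IsRecord (n : ℕ) (f : ℕ → ℕ) (i : ℕ) : Prop :=
  1 ≤ i ∧ i ≤ n ∧ ∀ k, 1 ≤ k → f^[k] i < i

/-- The smallest record larger than `i`. -/
noncomputable def nextRecord (n : ℕ) (f : ℕ → ℕ) (i : ℕ) : ℕ :=
  sInf {j | IsRecord n f j ∧ i < j}

/-- The record (blob) code of the tree, a function on `{1,…,n-1}`:
at a non-record position it records the parent, and at a record position it
records the parent of the next record. -/
noncomputable def blob (n : ℕ) (f : ℕ → ℕ) (i : ℕ) : ℕ :=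
  if IsRecord n f i then f (nextRecord n f i) else f i

/-- Number of children of vertex `v` in the tree. -/
def numChildren (n : ℕ) (f : ℕ → ℕ) (v : ℕ) : ℕ :=
  ((Finset.Icc 1 n).filter fun i => f i = v).card

/-- The list of the first `i+1` vertices visited by the priority-first search:
start at the root `0`; at each step visit the smallest unvisited vertex whose
parent has been visited. -/
noncomputable def wearyList (n : ℕ) (f : ℕ → ℕ) : ℕ → List ℕ
  | 0 => [0]
  | (i + 1) =>
      wearyList n f i ++
        [sInf {v | 1 ≤ v ∧ v ≤ n ∧ v ∉ wearyList n f i ∧ f v ∈ wearyList n f i}]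

/-- The weary permutation of the tree: `weary n f i` is the `i`-th vertex visited
by the priority-first search (with `weary n f 0 = 0`). -/
noncomputable def weary (n : ℕ) (f : ℕ → ℕ) (i : ℕ) : ℕ :=
  (wearyList n f n).getD i 0

/-- The inverse of the weary permutation. -/
noncomputable def wearyInv (n : ℕ) (f : ℕ → ℕ) (v : ℕ) : ℕ :=
  sInf {i | weary n f i = v}

/-- The preference sequence `π_T` of the tree: `π_T i = ω_T⁻¹ (f_T i) + 1`. -/
noncomputable def pref (n : ℕ) (f : ℕ → ℕ) (i : ℕ) : ℕ :=
  wearyInv n f (f i) + 1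

/-- Parent function of the priority tree `pt(T)`: `ω_T⁻¹ ∘ f_T ∘ ω_T`. -/
noncomputable def prioParent (n : ℕ) (f : ℕ → ℕ) (i : ℕ) : ℕ :=
  wearyInv n f (f (weary n f i))

/-- The list of spots occupied by cars `1,…,c` in the classical parking process:
car `c` parks at the first spot `≥ π c` not occupied by an earlier car. -/
noncomputable def spotList (π : ℕ → ℕ) : ℕ → List ℕ
  | 0 => []
  | (c + 1) => spotList π c ++ [sInf {s | π (c + 1) ≤ s ∧ s ∉ spotList π c}]

/-- The spot where car `c` ends up in the classical parking process. -/
noncomputable def spot (π : ℕ → ℕ) (c : ℕ) : ℕ :=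
  (spotList π c).getD (c - 1) 0

/-- `π` is a parking function of length `n`: preferences lie in `{1,…,n}`
(pinned to `1` outside `{1,…,n}`) and every car parks within the `n` spots. -/
def IsParkingFun (n : ℕ) (π : ℕ → ℕ) : Prop :=
  (∀ c, 1 ≤ c → c ≤ n → 1 ≤ π c ∧ π c ≤ n) ∧
  (∀ c, c = 0 ∨ n < c → π c = 1) ∧
  (∀ c, 1 ≤ c → c ≤ n → spot π c ≤ n)

/-- The bird's-eye permutation `ω_π`: the car parked at spot `i` (and `0` at `0`). -/
noncomputable def birdsEye (n : ℕ) (π : ℕ → ℕ) (i : ℕ) : ℕ :=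
  if i = 0 then 0 else sInf {c | 1 ≤ c ∧ c ≤ n ∧ spot π c = i}

/-- The inverse of the bird's-eye permutation. -/
noncomputable def birdsEyeInv (n : ℕ) (π : ℕ → ℕ) (c : ℕ) : ℕ :=
  sInf {i | birdsEye n π i = c}

/-- Parent function of the parking tree `PT(π)`: `f_π i = ω_π (π i - 1)`. -/
noncomputable def ptParent (n : ℕ) (π : ℕ → ℕ) (i : ℕ) : ℕ :=
  if 1 ≤ i ∧ i ≤ n then birdsEye n π (π i - 1) else 0

/-- `v` is a record of the parking function `π`, i.e. a left-to-right maximum of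
the word `ω_π(1) ω_π(2) ⋯ ω_π(n)`. -/
def IsPfRecord (n : ℕ) (π : ℕ → ℕ) (v : ℕ) : Prop :=
  ∃ i, 1 ≤ i ∧ i ≤ n ∧ birdsEye n π i = v ∧ ∀ j, 1 ≤ j → j < i → birdsEye n π j < v

/-- The waiting time of the tree: `wait T = Σ_{i=1}^n (i - f_{pt(T)}(i))`. -/
noncomputable def wait (n : ℕ) (f : ℕ → ℕ) : ℕ :=
  ∑ i ∈ Finset.Icc 1 n, (i - prioParent n f i)

/-- The number of priority small ascents of the tree. -/
noncomputable def psa (n : ℕ) (f : ℕ → ℕ) : ℕ :=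
  ((Finset.Icc 1 n).filter fun i => prioParent n f i = i - 1).card

/-- The number of children of the root. -/
def degRoot (n : ℕ) (f : ℕ → ℕ) : ℕ := numChildren n f 0

/-- The children sequence: `chseq n f j` is the number of vertices with exactly
`j` children. -/
def chseq (n : ℕ) (f : ℕ → ℕ) (j : ℕ) : ℕ :=
  ((Finset.Icc 0 n).filter fun v => numChildren n f v = j).card

/-- The number of probes of the parking function: `n` plus the total displacement. -/
noncomputable def probes (n : ℕ) (π : ℕ → ℕ) : ℕ :=
  n + ∑ c ∈ Finset.Icc 1 n, (spot π c - π c)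

/-- The number of lucky cars of `π`: cars parking at their preferred spot. -/
noncomputable def lucky (n : ℕ) (π : ℕ → ℕ) : ℕ :=
  ((Finset.Icc 1 n).filter fun c => spot π c = π c).card

/-- The number of `1`s in `π`. -/
def ones (n : ℕ) (π : ℕ → ℕ) : ℕ :=
  ((Finset.Icc 1 n).filter fun c => π c = 1).card

/-- The multiplicity of the value `v` in the parking function `π`. -/
def multIn (n : ℕ) (π : ℕ → ℕ) (v : ℕ) : ℕ :=
  ((Finset.Icc 1 n).filter fun c => π c = v).card

/-- The multiplicity sequence: `multSeq n π j` is the number of values in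
`{1,…,n+1}` appearing exactly `j` times in `π`. -/
def multSeq (n : ℕ) (π : ℕ → ℕ) (j : ℕ) : ℕ :=
  ((Finset.Icc 1 (n + 1)).filter fun v => multIn n π v = j).card

/-- The tree is a path graph with endpoints `0` and `n`: every vertex has at most
one child and `n` is the (unique) leaf. -/
def IsPathTree (n : ℕ) (f : ℕ → ℕ) : Prop :=
  (∀ v, v ≤ n → numChildren n f v ≤ 1) ∧ numChildren n f n = 0

/-- `g` is the parent map of a rooted forest on `{1,…,n}` rooted at `{1,…,k}`:
the vertices `1,…,k` are roots (fixed points), every other vertex of `{1,…,n}` has a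
parent in `{1,…,n}`, every vertex reaches one of the roots under iteration, and `g`
is pinned to `0` outside `{1,…,n}`. -/
def IsForestRootedAt (n k : ℕ) (g : ℕ → ℕ) : Prop :=
  (∀ i, 1 ≤ i → i ≤ k → g i = i) ∧
  (∀ i, k < i → i ≤ n → 1 ≤ g i ∧ g i ≤ n) ∧
  (∀ i, 1 ≤ i → i ≤ n → ∃ m, 1 ≤ g^[m] i ∧ g^[m] i ≤ k) ∧
  (∀ i, i = 0 ∨ n < i → g i = 0)

lemma eq_append_map_range {α : Type*} {L : ℕ → List α} {a : ℕ → α}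
    (h : ∀ i, L (i + 1) = L i ++ [a i]) (i : ℕ) : L i = L 0 ++ (List.range i).map a := by
  induction i with
  | zero => simp
  | succ i ih => rw [h, ih, List.range_succ, List.map_append, List.map_singleton, List.append_assoc]

lemma injOn_of_lt_imp_ne {α β : Type*} [LinearOrder α] {g : α → β} {s : Set α}
    (h : ∀ x ∈ s, ∀ y ∈ s, x < y → g x ≠ g y) : Set.InjOn g s :=
  Set.injOn_iff_injective.2 <| .of_lt_imp_ne fun x y hxy => h x x.2 y y.2 hxy

section Parking

variable {π σ : ℕ → ℕ} {n c : ℕ}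

lemma spot_succ (π : ℕ → ℕ) (c : ℕ) :
    spot π (c + 1) = sInf {s | π (c + 1) ≤ s ∧ s ∉ spotList π c} := by
  rw [spot, eq_append_map_range (L := spotList π) (fun _ => rfl) (c + 1)]
  simp [spotList, List.getD_eq_getElem?_getD]

lemma spotList_eq_map (π : ℕ → ℕ) (c : ℕ) :
    spotList π c = (List.range' 1 c).map (spot π) := by
  have hstep (d : ℕ) : spotList π (d + 1) = spotList π d ++ [spot π (1 + d)] := by
    rw [add_comm 1 d, spot_succ, spotList]
  rw [eq_append_map_range hstep, List.range'_eq_map_range, List.map_map]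
  rfl

lemma mem_spotList {s : ℕ} : s ∈ spotList π c ↔ s ∈ spot π '' Set.Ico 1 (c + 1) := by
  simp only [spotList_eq_map, List.mem_map, List.mem_range'_1, add_comm 1, Set.mem_image,
    Set.mem_Ico]

lemma isLeast_spot (π : ℕ → ℕ) (hc : 1 ≤ c) :
    IsLeast (Set.Ici (π c) \ spot π '' Set.Ico 1 c) (spot π c) := by
  obtain ⟨c, rfl⟩ := Nat.exists_eq_add_one.2 hc
  have hfree : {s | π (c + 1) ≤ s ∧ s ∉ spotList π c} =
      Set.Ici (π (c + 1)) \ spot π '' Set.Ico 1 (c + 1) := by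
    simp only [mem_spotList]
    rfl
  rw [spot_succ, hfree]
  exact isLeast_csInf ((Set.Ici_infinite _).sdiff ((Set.finite_Ico 1 _).image _)).nonempty

lemma spot_injOn (π : ℕ → ℕ) : Set.InjOn (spot π) (Set.Ici 1) :=
  injOn_of_lt_imp_ne fun d hd _ hc hdc heq => (isLeast_spot π hc).1.2 ⟨d, ⟨hd, hdc⟩, heq⟩

lemma spot_eqOn_of_isLeast
    (h : ∀ c ∈ Set.Icc 1 n, IsLeast (Set.Ici (π c) \ σ '' Set.Ico 1 c) (σ c)) :
    Set.EqOn (spot π) σ (Set.Icc 1 n) := by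
  intro c hc
  induction c using Nat.strong_induction_on with
  | _ c ih =>
    have himage : spot π '' Set.Ico 1 c = σ '' Set.Ico 1 c :=
      Set.image_congr fun d hd => ih d hd.2 ⟨hd.1, hd.2.le.trans hc.2⟩
    exact (himage ▸ isLeast_spot π hc.1).unique (h c hc)

lemma birdsEye_spot (hc : c ∈ Set.Icc 1 n) (hspot : spot π c ≠ 0) :
    birdsEye n π (spot π c) = c := by
  have hcars : {d | 1 ≤ d ∧ d ≤ n ∧ spot π d = spot π c} = {c} :=
    Set.eq_singleton_iff_unique_mem.2
      ⟨⟨hc.1, hc.2, rfl⟩, fun _ hd => spot_injOn π hd.1 hc.1 hd.2.2⟩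
  rw [birdsEye, if_neg hspot, hcars, csInf_singleton]

end Parking

section Search

variable {n : ℕ} {f : ℕ → ℕ} {i v : ℕ}

/-- The candidates of the priority-first search once steps `0,…,i` are done: the unvisited vertices
whose parent has been visited. Step `i + 1` visits the smallest of them. -/
def candidates (n : ℕ) (f : ℕ → ℕ) (i : ℕ) : Set ℕ :=
  {v | 1 ≤ v ∧ v ≤ n ∧ v ∉ wearyList n f i ∧ f v ∈ wearyList n f i}

lemma wearyList_eq_cons (n : ℕ) (f : ℕ → ℕ) (i : ℕ) :
    wearyList n f i = 0 :: (List.range i).map fun j => sInf (candidates n f j) :=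
  eq_append_map_range (L := wearyList n f) (fun _ => rfl) i

lemma length_wearyList (n : ℕ) (f : ℕ → ℕ) (i : ℕ) : (wearyList n f i).length = i + 1 := by
  simp [wearyList_eq_cons]

lemma weary_zero (n : ℕ) (f : ℕ → ℕ) : weary n f 0 = 0 := by
  simp [weary, wearyList_eq_cons]

lemma weary_succ (hi : i < n) : weary n f (i + 1) = sInf (candidates n f i) := by
  simp [weary, wearyList_eq_cons, hi]

lemma wearyList_eq_map (hi : i ≤ n) : wearyList n f i = (List.range (i + 1)).map (weary n f) := by
  rw [List.range_succ_eq_map, List.map_cons, List.map_map, weary_zero, wearyList_eq_cons]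
  congr 1
  exact List.map_congr_left fun j hj => (weary_succ ((List.mem_range.1 hj).trans_le hi)).symm

lemma mem_wearyList (hi : i ≤ n) : v ∈ wearyList n f i ↔ ∃ j ≤ i, weary n f j = v := by
  simp [wearyList_eq_map hi]

lemma zero_mem_wearyList (n : ℕ) (f : ℕ → ℕ) (i : ℕ) : 0 ∈ wearyList n f i := by
  simp [wearyList_eq_cons]

lemma exists_notMem_wearyList (f : ℕ → ℕ) (hi : i < n) : ∃ v ≤ n, v ∉ wearyList n f i := by
  have hcard : (wearyList n f i).toFinset.card < (Finset.Iic n).card :=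
    calc (wearyList n f i).toFinset.card
      _ ≤ (wearyList n f i).length := List.toFinset_card_le _
      _ = i + 1 := length_wearyList n f i
      _ < n + 1 := by omega
      _ = (Finset.Iic n).card := (Nat.card_Iic n).symm
  simpa using Finset.exists_mem_notMem_of_card_lt_card hcard

lemma IsCayleyTree.mapsTo_Iic (hf : IsCayleyTree n f) : Set.MapsTo f (Set.Iic n) (Set.Iic n) := by
  intro v hv
  obtain rfl | hv0 := v.eq_zero_or_pos
  · exact hf.1.trans_le n.zero_le
  · exact hf.2.2.1 v hv0 hv

lemma IsCayleyTree.exists_iterate_eq_zero (hf : IsCayleyTree n f) (hv : v ≤ n) :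
    ∃ k, f^[k] v = 0 := by
  obtain rfl | hv0 := v.eq_zero_or_pos
  · exact ⟨0, rfl⟩
  · exact hf.2.2.2 v hv0 hv

lemma candidates_nonempty (hf : IsCayleyTree n f) (hi : i < n) : (candidates n f i).Nonempty := by
  obtain ⟨v, hvn, hv⟩ := exists_notMem_wearyList f hi
  obtain ⟨m, hm⟩ := hf.exists_iterate_eq_zero hvn
  -- The path from an unvisited vertex to the root enters the visited part right after a candidate.
  obtain ⟨k, hk, hk'⟩ := Nat.exists_not_and_succ_of_not_zero_of_exists
    (p := fun k => f^[k] v ∈ wearyList n f i) hv ⟨m, hm ▸ zero_mem_wearyList n f i⟩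
  have hk0 : f^[k] v ≠ 0 := fun h => hk (h ▸ zero_mem_wearyList n f i)
  rw [Function.iterate_succ_apply'] at hk'
  exact ⟨f^[k] v, Nat.one_le_iff_ne_zero.2 hk0, hf.mapsTo_Iic.iterate k hvn, hk, hk'⟩

lemma isLeast_weary_succ (hf : IsCayleyTree n f) (hi : i < n) :
    IsLeast (candidates n f i) (weary n f (i + 1)) :=
  weary_succ (f := f) hi ▸ isLeast_csInf (candidates_nonempty hf hi)

lemma weary_injOn (hf : IsCayleyTree n f) : Set.InjOn (weary n f) (Set.Iic n) := by
  refine injOn_of_lt_imp_ne fun j _ i hi hji heq => ?_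
  obtain ⟨i, rfl⟩ := Nat.exists_eq_add_one.2 (Nat.zero_lt_of_lt hji)
  have hnot : weary n f (i + 1) ∉ wearyList n f i := (isLeast_weary_succ hf hi).1.2.2.1
  exact hnot ((mem_wearyList (Nat.le_of_lt hi)).2 ⟨j, Nat.le_of_lt_succ hji, heq⟩)

lemma weary_mapsTo (hf : IsCayleyTree n f) :
    Set.MapsTo (weary n f) (Set.Iic n) (Set.Iic n) := by
  rintro (_ | i) hi
  · exact (weary_zero n f).trans_le n.zero_le
  · exact (isLeast_weary_succ hf hi).1.2.1

lemma weary_bijOn (hf : IsCayleyTree n f) :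
    Set.BijOn (weary n f) (Set.Iic n) (Set.Iic n) :=
  ((Set.finite_Iic n).injOn_iff_bijOn_of_mapsTo (weary_mapsTo hf)).1 (weary_injOn hf)

lemma wearyInv_weary (hf : IsCayleyTree n f) (hi : i ≤ n) : wearyInv n f (weary n f i) = i := by
  have hle : wearyInv n f (weary n f i) ≤ i := Nat.sInf_le rfl
  have hinv : weary n f (wearyInv n f (weary n f i)) = weary n f i :=
    Nat.sInf_mem (s := {j | weary n f j = weary n f i}) ⟨i, rfl⟩
  exact weary_injOn hf (hle.trans hi) hi hinv

lemma wearyInv_le (hf : IsCayleyTree n f) (hv : v ≤ n) : wearyInv n f v ≤ n := by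
  obtain ⟨i, hi, rfl⟩ := (weary_bijOn hf).surjOn hv
  rwa [wearyInv_weary hf hi]

lemma weary_wearyInv (hf : IsCayleyTree n f) (hv : v ≤ n) : weary n f (wearyInv n f v) = v := by
  obtain ⟨i, hi, rfl⟩ := (weary_bijOn hf).surjOn hv
  rw [wearyInv_weary hf hi]

lemma wearyInv_injOn (hf : IsCayleyTree n f) : Set.InjOn (wearyInv n f) (Set.Iic n) :=
  Set.LeftInvOn.injOn fun _ hv => weary_wearyInv hf hv

lemma weary_mem_Icc (hf : IsCayleyTree n f) (hi : i ∈ Set.Icc 1 n) :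
    weary n f i ∈ Set.Icc 1 n := by
  obtain ⟨i, rfl⟩ := Nat.exists_eq_add_one.2 hi.1
  obtain ⟨hpos, hle, -⟩ := (isLeast_weary_succ hf hi.2).1
  exact ⟨hpos, hle⟩

lemma wearyInv_mem_Icc (hf : IsCayleyTree n f) (hv : v ∈ Set.Icc 1 n) :
    wearyInv n f v ∈ Set.Icc 1 n := by
  refine ⟨Nat.one_le_iff_ne_zero.2 fun h => ?_, wearyInv_le hf hv.2⟩
  have hroot : weary n f 0 = v := h ▸ weary_wearyInv hf hv.2
  exact Nat.one_le_iff_ne_zero.1 hv.1 (hroot.symm.trans (weary_zero n f))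

lemma mem_wearyList_iff_wearyInv_le (hf : IsCayleyTree n f) (hi : i ≤ n) (hv : v ≤ n) :
    v ∈ wearyList n f i ↔ wearyInv n f v ≤ i := by
  rw [mem_wearyList hi]
  constructor
  · rintro ⟨j, hj, rfl⟩
    rwa [wearyInv_weary hf (hj.trans hi)]
  · exact fun h => ⟨_, h, weary_wearyInv hf hv⟩

lemma mem_candidates_iff (hf : IsCayleyTree n f) (hi : i < n) (hv : v ∈ Set.Icc 1 n) :
    v ∈ candidates n f i ↔ i + 1 ∈ Set.Icc (pref n f v) (wearyInv n f v) := by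
  have hvisited : v ∈ wearyList n f i ↔ wearyInv n f v ≤ i :=
    mem_wearyList_iff_wearyInv_le hf hi.le hv.2
  have hparent : f v ∈ wearyList n f i ↔ wearyInv n f (f v) ≤ i :=
    mem_wearyList_iff_wearyInv_le hf hi.le (hf.mapsTo_Iic hv.2)
  have hcand : v ∈ candidates n f i ↔ v ∉ wearyList n f i ∧ f v ∈ wearyList n f i :=
    ⟨fun h => h.2.2, fun h => ⟨hv.1, hv.2, h⟩⟩
  rw [hcand, hvisited, hparent, Set.mem_Icc, pref]
  omega

lemma pref_le_wearyInv (hf : IsCayleyTree n f) (hv : v ∈ Set.Icc 1 n) :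
    pref n f v ≤ wearyInv n f v := by
  obtain ⟨hpos, hle⟩ := wearyInv_mem_Icc hf hv
  obtain ⟨i, hi⟩ := Nat.exists_eq_add_one.2 hpos
  have hin : i < n := by omega
  have hcand : v ∈ candidates n f i := by
    simpa only [← hi, weary_wearyInv hf hv.2] using (isLeast_weary_succ hf hin).1
  exact hi ▸ ((mem_candidates_iff hf hin hv).1 hcand).1

lemma weary_lt_of_mem_Ico (hf : IsCayleyTree n f) (hv : v ∈ Set.Icc 1 n)
    (hi : i ∈ Set.Ico (pref n f v) (wearyInv n f v)) : weary n f i < v := by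
  have hin : i < n := hi.2.trans_le (wearyInv_le hf hv.2)
  have hne : weary n f i ≠ v := by
    rintro rfl
    exact hi.2.ne (wearyInv_weary hf hin.le).symm
  obtain ⟨j, rfl⟩ := Nat.exists_eq_add_one.2 ((Nat.succ_pos _).trans_le hi.1)
  have hj : j < n := Nat.lt_of_succ_lt hin
  have hcand : v ∈ candidates n f j := (mem_candidates_iff hf hj hv).2 ⟨hi.1, hi.2.le⟩
  exact ((isLeast_weary_succ hf hj).2 hcand).lt_of_ne hne

lemma isLeast_wearyInv (hf : IsCayleyTree n f) (hv : v ∈ Set.Icc 1 n) :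
    IsLeast (Set.Ici (pref n f v) \ wearyInv n f '' Set.Ico 1 v) (wearyInv n f v) := by
  refine ⟨⟨pref_le_wearyInv hf hv, ?_⟩, fun s hs => ?_⟩
  · rintro ⟨u, hu, heq⟩
    exact hu.2.ne (wearyInv_injOn hf (hu.2.le.trans hv.2) hv.2 heq)
  · by_contra! hlt
    have hsn : s ≤ n := hlt.le.trans (wearyInv_le hf hv.2)
    have hpos : 1 ≤ s := (Nat.succ_pos _).trans_le hs.1
    have hearlier : weary n f s ∈ Set.Ico 1 v :=
      ⟨(weary_mem_Icc hf ⟨hpos, hsn⟩).1, weary_lt_of_mem_Ico hf hv ⟨hs.1, hlt⟩⟩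
    exact hs.2 ⟨weary n f s, hearlier, wearyInv_weary hf hsn⟩

theorem spot_pref_eqOn_wearyInv (hf : IsCayleyTree n f) :
    Set.EqOn (spot (pref n f)) (wearyInv n f) (Set.Icc 1 n) :=
  spot_eqOn_of_isLeast fun _ hv => isLeast_wearyInv hf hv

end Search

/-- The weary permutation of a Cayley tree coincides with the
bird's-eye permutation of its preference sequence: `ω_T = ω_{π_T}`. -/
theorem stmt13 (n : ℕ) (f : ℕ → ℕ) (hf : IsCayleyTree n f) :
    ∀ i, i ≤ n → weary n f i = birdsEye n (pref n f) i := by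
  intro i hi
  obtain rfl | hpos := i.eq_zero_or_pos
  · rw [weary_zero, birdsEye, if_pos rfl]
  have hcar : weary n f i ∈ Set.Icc 1 n := weary_mem_Icc hf ⟨hpos, hi⟩
  have hspot : spot (pref n f) (weary n f i) = i :=
    (spot_pref_eqOn_wearyInv hf hcar).trans (wearyInv_weary hf hi)
  have hbird := birdsEye_spot hcar (hspot.trans_ne hpos.ne')
  rw [← hbird, hspot]

end WearyParking
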